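/- Quantum mutual information bounds Wehrl mutual information: Let H₁, H₂ be finite-dimensional complex Hilbert spaces, let (Ω₁,μ) and (Ω₂,ν) be measure spaces, and let a ↦ φ_a ∈ H₁ and b ↦ θ_b ∈ H₂ be measurable families of unit vectors satisfying the resolutions of identity ∫_{Ω₁} |φ_a⟩⟨φ_a| dμ(a) = id_{H₁} and ∫_{Ω₂} |θ_b⟩⟨θ_b| dν(b) = id_{H₂} (Bochner integrals of operator-valued functions). For a density matrix ρ₁₂ on H₁⊗H₂ define the Wehrl entropies S^W[ρ₁₂] = ∫∫ φ( ⟨φ_a⊗θ_b, ρ₁₂ (φ_a⊗θ_b)⟩ ) dμ(a) dν(b), S^W[ρ₁] = ∫ φ( ⟨φ_a, ρ₁ φ_a⟩ ) dμ(a), and S^W[ρ₂] = ∫ φ( ⟨θ_b, ρ₂ θ_b⟩ ) dν(b), where φ(x) = −x ln x (with φ(0)=0) and the inner products are real since ρ₁₂ is positive semidefinite. Then S^W[ρ₁] + S^W[ρ₂] − S^W[ρ₁₂] ≤ S[ρ₁] + S[ρ₂] − S[ρ₁₂]. -/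

import Mathlib

open Matrix Kronecker Real
open scoped ComplexOrder

/-- Von Neumann entropy of a (Hermitian) matrix: the sum of `-λ ln λ` over its
eigenvalues, with the convention `0 ln 0 = 0`. -/
noncomputable def entropy {n : Type*} [Fintype n] [DecidableEq n]
    (A : Matrix n n ℂ) : ℝ :=
  if h : A.IsHermitian then ∑ i, Real.negMulLog (h.eigenvalues i) else 0

/-- Partial trace over the first factor of a twofold tensor product. -/
noncomputable def ptraceFst {m k : Type*} [Fintype m]
    (ρ : Matrix (m × k) (m × k) ℂ) : Matrix k k ℂ :=
  Matrix.of fun i j => ∑ a : m, ρ (a, i) (a, j)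

/-- Partial trace over the second factor of a twofold tensor product. -/
noncomputable def ptraceSnd {m k : Type*} [Fintype k]
    (ρ : Matrix (m × k) (m × k) ℂ) : Matrix m m ℂ :=
  Matrix.of fun i j => ∑ a : k, ρ (i, a) (j, a)

/-- Partial trace over the first factor of a threefold tensor product
(indexed as `(H₁ ⊗ H₂) ⊗ H₃`). -/
noncomputable def ptraceFst₃ {a b c : Type*} [Fintype a]
    (ρ : Matrix ((a × b) × c) ((a × b) × c) ℂ) : Matrix (b × c) (b × c) ℂ :=
  Matrix.of fun p q => ∑ i : a, ρ ((i, p.1), p.2) ((i, q.1), q.2)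

open MeasureTheory

/-- Wehrl entropy of `ρ` with respect to the family of coherent states `φ`. -/
noncomputable def wehrlEntropy {n Ω : Type*} [Fintype n] [MeasurableSpace Ω]
    (μ : Measure Ω) (φ : Ω → n → ℂ) (ρ : Matrix n n ℂ) : ℝ :=
  ∫ a, Real.negMulLog ((star (φ a) ⬝ᵥ ρ *ᵥ (φ a)).re) ∂μ

/-!
Each mutual information is a relative entropy: the quantum one is that of `ρ₁₂` and `ρ₁ ⊗ ρ₂`, the
Wehrl one is that of the outcome densities `p`, `q` of these two operators under the product
measurement `|φ_a⟩⟨φ_a| ⊗ |θ_b⟩⟨θ_b|`. The theorem is therefore an instance of the monotonicity of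
relative entropy under measurements. Since
`p log (p / q) = ∫₀^∞ (p² / (q + t p) - p / (1 + t)) dt`, monotonicity reduces to a fixed `t`.
There `p² / (q + t p) = 2 f p - f² (q + t p)` with `f = p / (q + t p)`, so the Kadison–Schwarz
inequality bounds its integral by `2 Tr (ρ F) - Tr ((σ + t ρ) F²)` for a Hermitian `F`; completing
squares in the eigenbases of `ρ` and `σ` bounds this by the same expression for the
Nussbaum–Szkoła distributions, whose relative entropy is `Tr ρ (log ρ - log σ)`.
-/

open Set Filter Topology

section LogKernel

/-- The kernel in `p log (p / q) = ∫₀^∞ logKernel p q t dt`, which reduces relative entropies to the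
rational functions `p² / (q + t p)`. -/
noncomputable def logKernel (p q t : ℝ) : ℝ := p ^ 2 / (q + t * p) - p / (1 + t)

theorem logKernel_zero_left (q t : ℝ) : logKernel 0 q t = 0 := by simp [logKernel]

theorem logKernel_eq_div {p q t : ℝ} (hp : 0 < p) (hq : 0 ≤ q) (ht : 0 < t) :
    logKernel p q t = p * (p - q) / ((q + t * p) * (1 + t)) := by
  have hqp : 0 < q + t * p := by positivity
  have h1t : 0 < 1 + t := by positivity
  rw [logKernel, div_sub_div _ _ hqp.ne' h1t.ne']
  ring

theorem logKernel_nonneg {p q t : ℝ} (hq : 0 ≤ q) (hpq : q ≤ p) (ht : 0 < t) :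
    0 ≤ logKernel p q t := by
  rcases (hq.trans hpq).eq_or_lt with rfl | hp
  · rw [logKernel_zero_left]
  · rw [logKernel_eq_div hp hq ht]
    have := sub_nonneg.2 hpq
    positivity

theorem logKernel_nonpos {p q t : ℝ} (hp : 0 ≤ p) (hpq : p ≤ q) (ht : 0 < t) :
    logKernel p q t ≤ 0 := by
  rcases hp.eq_or_lt with rfl | hp
  · rw [logKernel_zero_left]
  · have hq := hp.trans_le hpq
    rw [logKernel_eq_div hp hq.le ht]
    exact div_nonpos_of_nonpos_of_nonneg
      (mul_nonpos_of_nonneg_of_nonpos hp.le (sub_nonpos.2 hpq)) (by positivity)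

theorem hasDerivAt_logKernel {p q t : ℝ} (hp : 0 ≤ p) (hq : 0 < q) (ht : 0 ≤ t) :
    HasDerivAt (fun t ↦ p * (log (q + t * p) - log (1 + t))) (logKernel p q t) t := by
  have hnum : HasDerivAt (fun t ↦ q + t * p) p t := by
    simpa using ((hasDerivAt_id t).mul_const p).const_add q
  have hden : HasDerivAt (fun t : ℝ ↦ 1 + t) 1 t := (hasDerivAt_id t).const_add 1
  have hqp : 0 < q + t * p := by positivity
  have h1t : 0 < 1 + t := by positivity
  exact (((hnum.log hqp.ne').sub (hden.log h1t.ne')).const_mul p).congr_deriv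
    (by rw [logKernel]; ring)

theorem tendsto_logKernel_primitive {p q : ℝ} (hp : 0 < p) (hq : 0 < q) :
    Tendsto (fun t ↦ p * (log (q + t * p) - log (1 + t))) atTop (𝓝 (p * log p)) := by
  have hratio : Tendsto (fun t : ℝ ↦ p + (q - p) / (1 + t)) atTop (𝓝 p) := by
    simpa using
      ((tendsto_atTop_add_const_left atTop 1 tendsto_id).const_div_atTop (q - p)).const_add p
  refine ((hratio.log hp.ne').const_mul p).congr' ?_
  filter_upwards [eventually_ge_atTop 0] with t ht
  have h1t : 0 < 1 + t := by positivity
  have hqp : 0 < q + t * p := by positivity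
  rw [← log_div hqp.ne' h1t.ne']
  congr 2
  field_simp
  ring

theorem integrableOn_logKernel {p q : ℝ} (hp : 0 ≤ p) (hq : 0 ≤ q) (hac : q = 0 → p = 0) :
    IntegrableOn (logKernel p q) (Ioi 0) := by
  rcases hp.eq_or_lt with rfl | hp
  · simp [funext (logKernel_zero_left q)]
  have hq : 0 < q := hq.lt_of_ne fun h ↦ hp.ne' (hac h.symm)
  have hderiv : ∀ t ∈ Ici (0 : ℝ), HasDerivAt _ (logKernel p q t) t :=
    fun t ht ↦ hasDerivAt_logKernel hp.le hq ht
  rcases le_total q p with hpq | hpq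
  · exact integrableOn_Ioi_deriv_of_nonneg' hderiv (fun t ht ↦ logKernel_nonneg hq.le hpq ht)
      (tendsto_logKernel_primitive hp hq)
  · exact integrableOn_Ioi_deriv_of_nonpos' hderiv (fun t ht ↦ logKernel_nonpos hp.le hpq ht)
      (tendsto_logKernel_primitive hp hq)

theorem integral_logKernel {p q : ℝ} (hp : 0 ≤ p) (hq : 0 ≤ q) (hac : q = 0 → p = 0) :
    ∫ t in Ioi 0, logKernel p q t = p * log (p / q) := by
  rcases hp.eq_or_lt with rfl | hp
  · simp [logKernel_zero_left]
  have hq : 0 < q := hq.lt_of_ne fun h ↦ hp.ne' (hac h.symm)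
  rw [integral_Ioi_of_hasDerivAt_of_tendsto' (fun t ht ↦ hasDerivAt_logKernel hp.le hq ht)
    (integrableOn_logKernel hp.le hq.le hac) (tendsto_logKernel_primitive hp hq),
    log_div hp.ne' hq.ne']
  simp only [zero_mul, add_zero, log_one, sub_zero, mul_sub]

theorem integral_abs_logKernel {p q : ℝ} (hp : 0 ≤ p) (hq : 0 ≤ q) (hac : q = 0 → p = 0) :
    ∫ t in Ioi 0, |logKernel p q t| = |p * log (p / q)| := by
  rw [← integral_logKernel hp hq hac]
  rcases le_total q p with hpq | hpq
  · have hnn : ∀ t ∈ Ioi (0 : ℝ), 0 ≤ logKernel p q t := fun t ht ↦ logKernel_nonneg hq hpq ht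
    rw [abs_of_nonneg (setIntegral_nonneg measurableSet_Ioi hnn)]
    exact setIntegral_congr_fun measurableSet_Ioi fun t ht ↦ abs_of_nonneg (hnn t ht)
  · have hnp : ∀ t ∈ Ioi (0 : ℝ), logKernel p q t ≤ 0 := fun t ht ↦ logKernel_nonpos hp hpq ht
    rw [abs_of_nonpos (setIntegral_nonpos measurableSet_Ioi hnp), ← integral_neg]
    exact setIntegral_congr_fun measurableSet_Ioi fun t ht ↦ abs_of_nonpos (hnp t ht)

end LogKernel

section RelEntropy

/-- The relative entropy `∫ p log (p / q) dμ` of two densities. -/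
noncomputable def relEntropy {Ω : Type*} [MeasurableSpace Ω] (μ : Measure Ω) (p q : Ω → ℝ) : ℝ :=
  ∫ x, p x * log (p x / q x) ∂μ

/-- Conditions on densities `p`, `q` under which `relEntropy μ p q` is a genuine finite relative
entropy, not a junk value. -/
structure FiniteRelEntropy {Ω : Type*} [MeasurableSpace Ω] (μ : Measure Ω) (p q : Ω → ℝ) :
    Prop where
  nonneg_left : ∀ x, 0 ≤ p x
  nonneg_right : ∀ x, 0 ≤ q x
  eq_zero_of_right : ∀ x, q x = 0 → p x = 0
  integrable_left : Integrable p μ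
  aestronglyMeasurable_right : AEStronglyMeasurable q μ
  integrable_mul_log_div : Integrable (fun x ↦ p x * log (p x / q x)) μ

variable {Ω Ω' : Type*} [MeasurableSpace Ω] [MeasurableSpace Ω'] {μ : Measure Ω} {ν : Measure Ω'}
  {p q : Ω → ℝ} {p' q' : Ω' → ℝ}

namespace FiniteRelEntropy

theorem of_finite [Finite Ω] [DiscreteMeasurableSpace Ω] [IsFiniteMeasure μ]
    (hp : ∀ x, 0 ≤ p x) (hq : ∀ x, 0 ≤ q x) (hac : ∀ x, q x = 0 → p x = 0) :
    FiniteRelEntropy μ p q :=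
  ⟨hp, hq, hac, .of_finite, Integrable.of_finite.aestronglyMeasurable, .of_finite⟩

theorem integrable_logKernel_prod [SFinite μ] (h : FiniteRelEntropy μ p q) :
    Integrable (fun z : Ω × ℝ ↦ logKernel (p z.1) (q z.1) z.2)
      (μ.prod (volume.restrict (Ioi 0))) := by
  have hmeas : AEStronglyMeasurable (fun z : Ω × ℝ ↦ logKernel (p z.1) (q z.1) z.2)
      (μ.prod (volume.restrict (Ioi 0))) := by
    have hp : AEMeasurable (fun z : Ω × ℝ ↦ p z.1) (μ.prod (volume.restrict (Ioi 0))) :=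
      h.integrable_left.aemeasurable.comp_fst
    have hq : AEMeasurable (fun z : Ω × ℝ ↦ q z.1) (μ.prod (volume.restrict (Ioi 0))) :=
      h.aestronglyMeasurable_right.aemeasurable.comp_fst
    unfold logKernel
    exact AEMeasurable.aestronglyMeasurable (((hp.pow_const 2).div
      (hq.add (measurable_snd.aemeasurable.mul hp))).sub
      (hp.div (measurable_snd.aemeasurable.const_add 1)))
  have hfibre (x : Ω) := integrableOn_logKernel (h.nonneg_left x) (h.nonneg_right x)
    (h.eq_zero_of_right x)
  have hnorm (x : Ω) := integral_abs_logKernel (h.nonneg_left x) (h.nonneg_right x)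
    (h.eq_zero_of_right x)
  exact (integrable_prod_iff hmeas).2
    ⟨.of_forall hfibre, h.integrable_mul_log_div.abs.congr (.of_forall fun x ↦ (hnorm x).symm)⟩

theorem integral_integral_logKernel [SFinite μ] (h : FiniteRelEntropy μ p q) :
    ∫ t in Ioi 0, ∫ x, logKernel (p x) (q x) t ∂μ = relEntropy μ p q := by
  rw [← integral_integral_swap h.integrable_logKernel_prod]
  exact integral_congr_ae (.of_forall fun x ↦
    integral_logKernel (h.nonneg_left x) (h.nonneg_right x) (h.eq_zero_of_right x))

theorem integrable_sq_div (h : FiniteRelEntropy μ p q) {t : ℝ} (ht : 0 < t) :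
    Integrable (fun x ↦ p x ^ 2 / (q x + t * p x)) μ := by
  have hp := h.integrable_left.aemeasurable
  have hq := h.aestronglyMeasurable_right.aemeasurable
  refine (h.integrable_left.div_const t).mono'
    (AEMeasurable.aestronglyMeasurable (by fun_prop)) (.of_forall fun x ↦ ?_)
  have hpx := h.nonneg_left x
  have hqx := h.nonneg_right x
  rw [Real.norm_of_nonneg (by positivity)]
  rcases hpx.eq_or_lt with hpx | hpx
  · simp [← hpx]
  · rw [div_le_div_iff₀ (by positivity) ht]
    nlinarith [mul_nonneg hpx.le hqx]

theorem integral_logKernel (h : FiniteRelEntropy μ p q) {t : ℝ} (ht : 0 < t) :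
    ∫ x, logKernel (p x) (q x) t ∂μ =
      ∫ x, p x ^ 2 / (q x + t * p x) ∂μ - (∫ x, p x ∂μ) / (1 + t) := by
  simp only [logKernel]
  rw [integral_sub (h.integrable_sq_div ht) (h.integrable_left.div_const _), integral_div]

end FiniteRelEntropy

theorem relEntropy_le_of_integral_sq_div_le [SFinite μ] [SFinite ν]
    (h : FiniteRelEntropy μ p q) (h' : FiniteRelEntropy ν p' q')
    (hmass : ∫ x, p x ∂μ = ∫ y, p' y ∂ν)
    (hle : ∀ t, 0 < t →
      ∫ x, p x ^ 2 / (q x + t * p x) ∂μ ≤ ∫ y, p' y ^ 2 / (q' y + t * p' y) ∂ν) :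
    relEntropy μ p q ≤ relEntropy ν p' q' := by
  rw [← h.integral_integral_logKernel, ← h'.integral_integral_logKernel]
  refine setIntegral_mono_on h.integrable_logKernel_prod.integral_prod_right
    h'.integrable_logKernel_prod.integral_prod_right measurableSet_Ioi fun t ht ↦ ?_
  rw [h.integral_logKernel ht, h'.integral_logKernel ht, hmass]
  exact sub_le_sub_right (hle t ht) _

end RelEntropy

section Coupling

variable {Ω₁ Ω₂ : Type*} [MeasurableSpace Ω₁] [MeasurableSpace Ω₂]

/-- A joint density `P` with marginals `Q₁` and `Q₂`, all of finite differential entropy. The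
pointwise bounds hold for the statistics of measurements whose effects are at most the identity;
they give absolute continuity with respect to `Q₁ Q₂` without exceptional null sets. -/
structure IsCoupling (μ : Measure Ω₁) (ν : Measure Ω₂) (P : Ω₁ × Ω₂ → ℝ) (Q₁ : Ω₁ → ℝ)
    (Q₂ : Ω₂ → ℝ) : Prop where
  nonneg : ∀ z, 0 ≤ P z
  le_fst : ∀ z, P z ≤ Q₁ z.1
  le_snd : ∀ z, P z ≤ Q₂ z.2
  integrable : Integrable P (μ.prod ν)
  aemeasurable_fst : AEMeasurable Q₁ μ
  aemeasurable_snd : AEMeasurable Q₂ ν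
  integral_snd : ∀ a, ∫ b, P (a, b) ∂ν = Q₁ a
  integral_fst : ∀ b, ∫ a, P (a, b) ∂μ = Q₂ b
  integrable_negMulLog : Integrable (fun z ↦ negMulLog (P z)) (μ.prod ν)
  integrable_negMulLog_fst : Integrable (fun a ↦ negMulLog (Q₁ a)) μ
  integrable_negMulLog_snd : Integrable (fun b ↦ negMulLog (Q₂ b)) ν

namespace IsCoupling

variable {μ : Measure Ω₁} {ν : Measure Ω₂} {P : Ω₁ × Ω₂ → ℝ} {Q₁ : Ω₁ → ℝ} {Q₂ : Ω₂ → ℝ}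

theorem fst_nonneg (h : IsCoupling μ ν P Q₁ Q₂) (a : Ω₁) : 0 ≤ Q₁ a :=
  h.integral_snd a ▸ integral_nonneg fun b ↦ h.nonneg (a, b)

theorem snd_nonneg (h : IsCoupling μ ν P Q₁ Q₂) (b : Ω₂) : 0 ≤ Q₂ b :=
  h.integral_fst b ▸ integral_nonneg fun a ↦ h.nonneg (a, b)

theorem eq_zero_of_mul_eq_zero (h : IsCoupling μ ν P Q₁ Q₂) (z : Ω₁ × Ω₂)
    (hz : Q₁ z.1 * Q₂ z.2 = 0) : P z = 0 := by
  refine (h.nonneg z).antisymm' ?_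
  rcases mul_eq_zero.1 hz with hz | hz
  · exact hz ▸ h.le_fst z
  · exact hz ▸ h.le_snd z

theorem mul_log_mul (h : IsCoupling μ ν P Q₁ Q₂) (z : Ω₁ × Ω₂) :
    P z * log (Q₁ z.1 * Q₂ z.2) = P z * log (Q₁ z.1) + P z * log (Q₂ z.2) := by
  rcases (h.nonneg z).eq_or_lt with hP | hP
  · simp [← hP]
  · rw [log_mul (hP.trans_le (h.le_fst z)).ne' (hP.trans_le (h.le_snd z)).ne', mul_add]

theorem mul_log_div (h : IsCoupling μ ν P Q₁ Q₂) (z : Ω₁ × Ω₂) :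
    P z * log (P z / (Q₁ z.1 * Q₂ z.2)) =
      -negMulLog (P z) - P z * log (Q₁ z.1 * Q₂ z.2) := by
  rcases (h.nonneg z).eq_or_lt with hP | hP
  · simp [← hP]
  · have hQ : Q₁ z.1 * Q₂ z.2 ≠ 0 := fun hz ↦ hP.ne' (h.eq_zero_of_mul_eq_zero z hz)
    rw [log_div hP.ne' hQ, negMulLog]
    ring

variable [SFinite μ] [SFinite ν]

theorem swap (h : IsCoupling μ ν P Q₁ Q₂) : IsCoupling ν μ (fun z ↦ P z.swap) Q₂ Q₁ where
  nonneg z := h.nonneg z.swap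
  le_fst z := h.le_snd z.swap
  le_snd z := h.le_fst z.swap
  integrable := h.integrable.swap
  aemeasurable_fst := h.aemeasurable_snd
  aemeasurable_snd := h.aemeasurable_fst
  integral_snd := h.integral_fst
  integral_fst := h.integral_snd
  integrable_negMulLog := h.integrable_negMulLog.swap
  integrable_negMulLog_fst := h.integrable_negMulLog_snd
  integrable_negMulLog_snd := h.integrable_negMulLog_fst

theorem integrable_mul_log_fst (h : IsCoupling μ ν P Q₁ Q₂) :
    Integrable (fun z ↦ P z * log (Q₁ z.1)) (μ.prod ν) := by
  have hmeas : AEStronglyMeasurable (fun z ↦ P z * log (Q₁ z.1)) (μ.prod ν) :=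
    h.integrable.aestronglyMeasurable.mul h.aemeasurable_fst.log.comp_fst.aestronglyMeasurable
  refine (integrable_prod_iff hmeas).2
    ⟨?_, h.integrable_negMulLog_fst.norm.congr (.of_forall fun a ↦ ?_)⟩
  · filter_upwards [h.integrable.prod_right_ae] with a ha using ha.mul_const _
  · simp only [negMulLog, norm_mul, norm_neg, integral_mul_const,
      Real.norm_of_nonneg (h.nonneg _), h.integral_snd, Real.norm_of_nonneg (h.fst_nonneg a)]

theorem integral_mul_log_fst (h : IsCoupling μ ν P Q₁ Q₂) :
    ∫ z, P z * log (Q₁ z.1) ∂μ.prod ν = -∫ a, negMulLog (Q₁ a) ∂μ := by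
  rw [integral_prod _ h.integrable_mul_log_fst]
  simp only [integral_mul_const, h.integral_snd, negMulLog, neg_mul, integral_neg, neg_neg]

theorem integrable_mul_log_snd (h : IsCoupling μ ν P Q₁ Q₂) :
    Integrable (fun z ↦ P z * log (Q₂ z.2)) (μ.prod ν) :=
  h.swap.integrable_mul_log_fst.swap

theorem integral_mul_log_snd (h : IsCoupling μ ν P Q₁ Q₂) :
    ∫ z, P z * log (Q₂ z.2) ∂μ.prod ν = -∫ b, negMulLog (Q₂ b) ∂ν := by
  rw [← h.swap.integral_mul_log_fst]
  exact (integral_prod_swap (fun z ↦ P z * log (Q₂ z.2))).symm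

theorem integrable_mul_log_mul (h : IsCoupling μ ν P Q₁ Q₂) :
    Integrable (fun z ↦ P z * log (Q₁ z.1 * Q₂ z.2)) (μ.prod ν) :=
  (h.integrable_mul_log_fst.add h.integrable_mul_log_snd).congr
    (.of_forall fun z ↦ (h.mul_log_mul z).symm)

theorem integral_mul_log_mul (h : IsCoupling μ ν P Q₁ Q₂) :
    ∫ z, P z * log (Q₁ z.1 * Q₂ z.2) ∂μ.prod ν =
      -(∫ a, negMulLog (Q₁ a) ∂μ + ∫ b, negMulLog (Q₂ b) ∂ν) := by
  simp only [h.mul_log_mul]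
  rw [integral_add h.integrable_mul_log_fst h.integrable_mul_log_snd, h.integral_mul_log_fst,
    h.integral_mul_log_snd, neg_add]

theorem finiteRelEntropy (h : IsCoupling μ ν P Q₁ Q₂) :
    FiniteRelEntropy (μ.prod ν) P (fun z ↦ Q₁ z.1 * Q₂ z.2) where
  nonneg_left := h.nonneg
  nonneg_right z := mul_nonneg (h.fst_nonneg _) (h.snd_nonneg _)
  eq_zero_of_right := h.eq_zero_of_mul_eq_zero
  integrable_left := h.integrable
  aestronglyMeasurable_right :=
    (h.aemeasurable_fst.comp_fst.mul h.aemeasurable_snd.comp_snd).aestronglyMeasurable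
  integrable_mul_log_div := by
    simp only [h.mul_log_div]
    exact h.integrable_negMulLog.neg.sub h.integrable_mul_log_mul

theorem relEntropy_eq (h : IsCoupling μ ν P Q₁ Q₂) :
    relEntropy (μ.prod ν) P (fun z ↦ Q₁ z.1 * Q₂ z.2) =
      ∫ a, negMulLog (Q₁ a) ∂μ + ∫ b, negMulLog (Q₂ b) ∂ν -
        ∫ z, negMulLog (P z) ∂μ.prod ν := by
  simp only [relEntropy, h.mul_log_div]
  rw [integral_sub h.integrable_negMulLog.fun_neg h.integrable_mul_log_mul, integral_neg,
    h.integral_mul_log_mul]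
  ring

end IsCoupling

end Coupling

section BornRule

variable {n n₁ n₂ : Type*} [Fintype n] [Fintype n₁] [Fintype n₂]

/-- The Born rule: the probability (density) `Re Tr (A M)` of the effect `M` in the state `A`, as a
real-linear functional of `M`. -/
noncomputable def bornProb (A : Matrix n n ℂ) : Matrix n n ℂ →ₗ[ℝ] ℝ :=
  Complex.reLm ∘ₗ (traceLinearMap n ℝ ℂ) ∘ₗ LinearMap.mulLeft ℝ A

theorem bornProb_apply (A M : Matrix n n ℂ) : bornProb A M = (A * M).trace.re := rfl

theorem bornProb_comm (A M : Matrix n n ℂ) : bornProb A M = bornProb M A := by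
  rw [bornProb_apply, bornProb_apply, trace_mul_comm]

open scoped MatrixOrder in
theorem bornProb_nonneg {A M : Matrix n n ℂ} (hA : A.PosSemidef) (hM : M.PosSemidef) :
    0 ≤ bornProb A M := by
  classical
  obtain ⟨C, rfl⟩ := CStarAlgebra.nonneg_iff_eq_star_mul_self.1 hA.nonneg
  rw [bornProb_apply, star_eq_conjTranspose, mul_assoc, trace_mul_comm]
  exact (Complex.nonneg_iff.1 (hM.mul_mul_conjTranspose_same C).trace_nonneg).1

theorem bornProb_mono {A M N : Matrix n n ℂ} (hA : A.PosSemidef) (hMN : (N - M).PosSemidef) :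
    bornProb A M ≤ bornProb A N := by
  rw [← sub_nonneg, ← map_sub]
  exact bornProb_nonneg hA hMN

theorem norm_bornProb_div_le {ρ τ M : Matrix n n ℂ} (hρ : ρ.PosSemidef) (hτ : τ.PosSemidef)
    {C : ℝ} (hρτ : (C • τ - ρ).PosSemidef) (hM : M.PosSemidef) :
    ‖bornProb ρ M / bornProb τ M‖ ≤ |C| := by
  have hτ0 := bornProb_nonneg hτ hM
  have hle : bornProb ρ M ≤ C * bornProb τ M := by
    have hmono := bornProb_mono hM hρτ
    rwa [map_smul, bornProb_comm _ ρ, bornProb_comm _ τ] at hmono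
  rw [Real.norm_of_nonneg (div_nonneg (bornProb_nonneg hρ hM) hτ0)]
  exact div_le_of_le_mul₀ hτ0 (abs_nonneg C)
    (hle.trans (mul_le_mul_of_nonneg_right (le_abs_self C) hτ0))

theorem trace_mul_eq_bornProb {A M : Matrix n n ℂ} (hA : A.IsHermitian) (hM : M.IsHermitian) :
    (A * M).trace = bornProb A M := by
  refine (Complex.conj_eq_iff_re.1 ?_).symm
  rw [← Complex.star_def, ← trace_conjTranspose, conjTranspose_mul, hA.eq, hM.eq, trace_mul_comm]

theorem bornProb_kronecker {A M : Matrix n₁ n₁ ℂ} {B N : Matrix n₂ n₂ ℂ} (hA : A.IsHermitian)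
    (hM : M.IsHermitian) (hB : B.IsHermitian) (hN : N.IsHermitian) :
    bornProb (A ⊗ₖ B) (M ⊗ₖ N) = bornProb A M * bornProb B N := by
  rw [bornProb_apply, ← mul_kronecker_mul, trace_kronecker, trace_mul_eq_bornProb hA hM,
    trace_mul_eq_bornProb hB hN, ← Complex.ofReal_mul, Complex.ofReal_re]

theorem trace_mul_kronecker_one [DecidableEq n₂] (ρ : Matrix (n₁ × n₂) (n₁ × n₂) ℂ)
    (M : Matrix n₁ n₁ ℂ) : (ρ * (M ⊗ₖ 1)).trace = (ptraceSnd ρ * M).trace := by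
  simp only [trace, diag_apply, mul_apply, kroneckerMap_apply, Fintype.sum_prod_type, ptraceSnd,
    of_apply, Finset.sum_mul, one_apply, mul_ite, mul_one, mul_zero, Finset.sum_ite_eq',
    Finset.mem_univ, if_true]
  exact Finset.sum_congr rfl fun i _ ↦ Finset.sum_comm

theorem trace_mul_one_kronecker [DecidableEq n₁] (ρ : Matrix (n₁ × n₂) (n₁ × n₂) ℂ)
    (N : Matrix n₂ n₂ ℂ) : (ρ * (1 ⊗ₖ N)).trace = (ptraceFst ρ * N).trace := by
  simp only [trace, diag_apply, mul_apply, kroneckerMap_apply, Fintype.sum_prod_type_right,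
    ptraceFst, of_apply, Finset.sum_mul, one_apply, ite_mul, one_mul, zero_mul, mul_ite, mul_zero,
    Finset.sum_ite_eq', Finset.mem_univ, if_true]
  exact Finset.sum_congr rfl fun i _ ↦ Finset.sum_comm

theorem bornProb_kronecker_one [DecidableEq n₂] (ρ : Matrix (n₁ × n₂) (n₁ × n₂) ℂ)
    (M : Matrix n₁ n₁ ℂ) : bornProb ρ (M ⊗ₖ 1) = bornProb (ptraceSnd ρ) M :=
  congrArg Complex.re (trace_mul_kronecker_one ρ M)

theorem bornProb_one_kronecker [DecidableEq n₁] (ρ : Matrix (n₁ × n₂) (n₁ × n₂) ℂ)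
    (N : Matrix n₂ n₂ ℂ) : bornProb ρ (1 ⊗ₖ N) = bornProb (ptraceFst ρ) N :=
  congrArg Complex.re (trace_mul_one_kronecker ρ N)

omit [Fintype n₁] in
theorem ptraceSnd_posSemidef {ρ : Matrix (n₁ × n₂) (n₁ × n₂) ℂ} (hρ : ρ.PosSemidef) :
    (ptraceSnd ρ).PosSemidef := by
  have hsum : ptraceSnd ρ = ∑ b, ρ.submatrix (fun i ↦ (i, b)) (fun i ↦ (i, b)) := by
    ext i j
    simp only [ptraceSnd, of_apply, Matrix.sum_apply, submatrix_apply]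
  exact hsum ▸ posSemidef_sum _ fun b _ ↦ hρ.submatrix _

omit [Fintype n₂] in
theorem ptraceFst_posSemidef {ρ : Matrix (n₁ × n₂) (n₁ × n₂) ℂ} (hρ : ρ.PosSemidef) :
    (ptraceFst ρ).PosSemidef := by
  have hsum : ptraceFst ρ = ∑ a, ρ.submatrix (fun i ↦ (a, i)) (fun i ↦ (a, i)) := by
    ext i j
    simp only [ptraceFst, of_apply, Matrix.sum_apply, submatrix_apply]
  exact hsum ▸ posSemidef_sum _ fun a _ ↦ hρ.submatrix _

theorem bornProb_kronecker_le_fst [DecidableEq n₂] {ρ : Matrix (n₁ × n₂) (n₁ × n₂) ℂ}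
    (hρ : ρ.PosSemidef) {M : Matrix n₁ n₁ ℂ} {N : Matrix n₂ n₂ ℂ} (hM : M.PosSemidef)
    (hN : (1 - N).PosSemidef) : bornProb ρ (M ⊗ₖ N) ≤ bornProb (ptraceSnd ρ) M := by
  rw [← bornProb_kronecker_one]
  have hsub : M ⊗ₖ 1 - M ⊗ₖ N = M ⊗ₖ (1 - N) :=
    (map_sub (kroneckerBilinear (R := ℝ) M) 1 N).symm
  exact bornProb_mono hρ (hsub ▸ hM.kronecker hN)

theorem bornProb_kronecker_le_snd [DecidableEq n₁] {ρ : Matrix (n₁ × n₂) (n₁ × n₂) ℂ}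
    (hρ : ρ.PosSemidef) {M : Matrix n₁ n₁ ℂ} {N : Matrix n₂ n₂ ℂ} (hM : (1 - M).PosSemidef)
    (hN : N.PosSemidef) : bornProb ρ (M ⊗ₖ N) ≤ bornProb (ptraceFst ρ) N := by
  rw [← bornProb_one_kronecker]
  have hsub : 1 ⊗ₖ N - M ⊗ₖ N = (1 - M) ⊗ₖ N :=
    ((kroneckerBilinear (R := ℝ)).map_sub₂ 1 M N).symm
  exact bornProb_mono hρ (hsub ▸ hM.kronecker hN)

end BornRule

section PureState

variable {n : Type*}

/-- The rank-one operator `|v⟩⟨v|`, a pure state if `v` is a unit vector. -/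
def pureState (v : n → ℂ) : Matrix n n ℂ := vecMulVec v (star v)

theorem pureState_posSemidef [Finite n] (v : n → ℂ) : (pureState v).PosSemidef :=
  posSemidef_vecMulVec_self_star v

variable [Fintype n]

theorem bornProb_pureState (A : Matrix n n ℂ) (v : n → ℂ) :
    bornProb A (pureState v) = (star v ⬝ᵥ A *ᵥ v).re := by
  rw [bornProb_apply, pureState, mul_vecMulVec, trace_vecMulVec, dotProduct_comm]

theorem one_sub_pureState_posSemidef [DecidableEq n] {v : n → ℂ} (hv : star v ⬝ᵥ v = 1) :
    (1 - pureState v).PosSemidef := by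
  have hidem : pureState v * pureState v = pureState v := by
    rw [pureState, vecMulVec_mul_vecMulVec, hv, one_smul]
  have hproj : 1 - pureState v = (1 - pureState v)ᴴ * (1 - pureState v) := by
    rw [conjTranspose_sub, conjTranspose_one, (pureState_posSemidef v).isHermitian.eq, sub_mul,
      mul_sub, mul_sub, hidem]
    simp
  exact hproj ▸ posSemidef_conjTranspose_mul_self _

theorem pureState_kronecker {n₁ n₂ : Type*} (v : n₁ → ℂ) (w : n₂ → ℂ) :
    pureState v ⊗ₖ pureState w = pureState fun z ↦ v z.1 * w z.2 := by
  ext i j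
  simp only [pureState, kroneckerMap_apply, vecMulVec_apply, Pi.star_apply, star_mul']
  ring

theorem pureState_col_kronecker {n₁ n₂ : Type*} (A : Matrix n₁ n₁ ℂ) (B : Matrix n₂ n₂ ℂ)
    (z : n₁ × n₂) :
    pureState ((A ⊗ₖ B).col z) = pureState (A.col z.1) ⊗ₖ pureState (B.col z.2) :=
  (pureState_kronecker (A.col z.1) (B.col z.2)).symm

variable [DecidableEq n]

theorem sum_pureState_col {V : Matrix n n ℂ} (hV : V ∈ unitary (Matrix n n ℂ)) :
    ∑ j, pureState (V.col j) = 1 := by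
  rw [← (Unitary.mem_iff.1 hV).2]
  ext i k
  simp only [Matrix.sum_apply, pureState, vecMulVec_apply, col_apply, Pi.star_apply, mul_apply,
    star_eq_conjTranspose, conjTranspose_apply]

theorem star_col_dotProduct_col {V : Matrix n n ℂ} (hV : V ∈ unitary (Matrix n n ℂ)) (j : n) :
    star (V.col j) ⬝ᵥ V.col j = 1 :=
  (congrFun₂ (Unitary.mem_iff.1 hV).1 j j).trans (one_apply_eq j)

end PureState

section POVM

open scoped Matrix.Norms.L2Operator

variable {Ω Ω' n n' : Type*} [MeasurableSpace Ω] [MeasurableSpace Ω'] [Fintype n] [DecidableEq n]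
  [Fintype n'] [DecidableEq n']

theorem integrable_linearMap_comp {G : Type*} [NormedAddCommGroup G] [NormedSpace ℝ G]
    {μ : Measure Ω} {E : Ω → Matrix n n ℂ} (hE : Integrable E μ) (L : Matrix n n ℂ →ₗ[ℝ] G) :
    Integrable (fun x ↦ L (E x)) μ :=
  L.toContinuousLinearMap.integrable_comp hE

theorem integral_linearMap_comp {G : Type*} [NormedAddCommGroup G] [NormedSpace ℝ G]
    [CompleteSpace G] {μ : Measure Ω} {E : Ω → Matrix n n ℂ} (hE : Integrable E μ)
    (L : Matrix n n ℂ →ₗ[ℝ] G) : ∫ x, L (E x) ∂μ = L (∫ x, E x ∂μ) :=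
  L.toContinuousLinearMap.integral_comp_comm hE

theorem integrable_matrix_iff {μ : Measure Ω} {E : Ω → Matrix n n ℂ} :
    Integrable E μ ↔ ∀ i j, Integrable (fun x ↦ E x i j) μ := by
  refine ⟨fun hE i j ↦ integrable_linearMap_comp hE (entryLinearMap ℝ ℂ i j), fun hE ↦ ?_⟩
  have hsum : E = fun x ↦ ∑ i, ∑ j, E x i j • single i j (1 : ℂ) := by
    funext x
    simpa only [smul_single, smul_eq_mul, mul_one] using matrix_eq_sum_single (E x)
  rw [hsum]
  exact integrable_finsetSum _ fun i _ ↦ integrable_finsetSum _ fun j _ ↦ (hE i j).smul_const _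

theorem integral_matrix_apply {μ : Measure Ω} {E : Ω → Matrix n n ℂ} (hE : Integrable E μ)
    (i j : n) : (∫ x, E x ∂μ) i j = ∫ x, E x i j ∂μ :=
  (integral_linearMap_comp hE (entryLinearMap ℝ ℂ i j)).symm

/-- A positive-operator-valued measure with density `E` with respect to `μ`: a family of positive
operators resolving the identity. The Bochner integral is taken for the L2 operator norm, the choice
of norm being immaterial in finite dimension. -/
structure IsPOVMDensity (μ : Measure Ω) (E : Ω → Matrix n n ℂ) : Prop where
  posSemidef : ∀ x, (E x).PosSemidef
  integrable : Integrable E μ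
  integral_eq_one : ∫ x, E x ∂μ = 1

namespace IsPOVMDensity

variable {μ : Measure Ω} {ν : Measure Ω'} {E : Ω → Matrix n n ℂ} {F : Ω' → Matrix n' n' ℂ}

theorem integrable_comp {G : Type*} [NormedAddCommGroup G] [NormedSpace ℝ G]
    (hE : IsPOVMDensity μ E) (L : Matrix n n ℂ →ₗ[ℝ] G) : Integrable (fun x ↦ L (E x)) μ :=
  integrable_linearMap_comp hE.integrable L

theorem integral_comp {G : Type*} [NormedAddCommGroup G] [NormedSpace ℝ G] [CompleteSpace G]
    (hE : IsPOVMDensity μ E) (L : Matrix n n ℂ →ₗ[ℝ] G) : ∫ x, L (E x) ∂μ = L 1 := by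
  rw [integral_linearMap_comp hE.integrable, hE.integral_eq_one]

theorem kronecker [SFinite μ] [SFinite ν] (hE : IsPOVMDensity μ E) (hF : IsPOVMDensity ν F) :
    IsPOVMDensity (μ.prod ν) (fun z ↦ E z.1 ⊗ₖ F z.2) := by
  have hint : Integrable (fun z : Ω × Ω' ↦ E z.1 ⊗ₖ F z.2) (μ.prod ν) :=
    integrable_matrix_iff.2 fun i j ↦ (integrable_matrix_iff.1 hE.integrable i.1 j.1).mul_prod
      (integrable_matrix_iff.1 hF.integrable i.2 j.2)
  refine ⟨fun z ↦ (hE.posSemidef z.1).kronecker (hF.posSemidef z.2), hint, ?_⟩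
  have hinner (a : Ω) : ∫ b, E a ⊗ₖ F b ∂ν = E a ⊗ₖ 1 :=
    hF.integral_comp (kroneckerBilinear (R := ℝ) (E a))
  have houter : ∫ a, E a ⊗ₖ (1 : Matrix n' n' ℂ) ∂μ = 1 ⊗ₖ 1 :=
    hE.integral_comp ((kroneckerBilinear (R := ℝ)).flip (1 : Matrix n' n' ℂ))
  rw [integral_prod _ hint]
  simp only [hinner, houter, one_kronecker_one]

theorem isHermitian_integral_smul (hE : IsPOVMDensity μ E) {f : Ω → ℝ}
    (hfE : Integrable (fun x ↦ f x • E x) μ) : (∫ x, f x • E x ∂μ).IsHermitian := by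
  have hstar := integral_linearMap_comp hfE (conjTransposeLinearEquiv n n ℝ ℂ).toLinearMap
  refine hstar.symm.trans (integral_congr_ae (.of_forall fun x ↦ ?_))
  change (f x • E x)ᴴ = f x • E x
  rw [conjTranspose_smul, (hE.posSemidef x).isHermitian.eq, star_trivial]

/-- A Kadison–Schwarz inequality: integrate `(f - F) E (f - F) ≥ 0`, where `F = ∫ f E`. -/
theorem bornProb_integral_smul_mul_self_le (hE : IsPOVMDensity μ E) {σ : Matrix n n ℂ}
    (hσ : σ.PosSemidef) {f : Ω → ℝ} (hfE : Integrable (fun x ↦ f x • E x) μ)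
    (hf2 : Integrable (fun x ↦ f x ^ 2 * bornProb σ (E x)) μ) :
    bornProb σ ((∫ x, f x • E x ∂μ) * ∫ x, f x • E x ∂μ) ≤
      ∫ x, f x ^ 2 * bornProb σ (E x) ∂μ := by
  have hFherm := hE.isHermitian_integral_smul hfE
  set F := ∫ x, f x • E x ∂μ with hF
  let L₁ : Matrix n n ℂ →ₗ[ℝ] ℝ := bornProb σ ∘ₗ (LinearMap.mulLeft ℝ F + LinearMap.mulRight ℝ F)
  let L₂ : Matrix n n ℂ →ₗ[ℝ] ℝ := bornProb σ ∘ₗ LinearMap.mulLeft ℝ F ∘ₗ LinearMap.mulRight ℝ F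
  have hL₁ : ∫ x, L₁ (f x • E x) ∂μ = 2 * bornProb σ (F * F) := by
    rw [integral_linearMap_comp hfE, ← hF, two_mul, ← map_add]
    rfl
  have hL₂ : ∫ x, L₂ (E x) ∂μ = bornProb σ (F * F) := by
    rw [hE.integral_comp]
    simp only [L₂, LinearMap.comp_apply, LinearMap.mulRight_apply, LinearMap.mulLeft_apply, one_mul]
  have hpos (x : Ω) : L₁ (f x • E x) - L₂ (E x) ≤ f x ^ 2 * bornProb σ (E x) := by
    have hconj : (f x • 1 - F) * E x * (f x • 1 - F)ᴴ =
        f x ^ 2 • E x - (F * (f x • E x) + f x • E x * F) + F * (E x * F) := by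
      rw [conjTranspose_sub, conjTranspose_smul, conjTranspose_one, hFherm.eq, star_trivial]
      simp only [sub_mul, mul_sub, smul_mul_assoc, mul_smul_comm, one_mul, mul_one, smul_sub,
        smul_smul, pow_two, mul_assoc]
      abel
    have hnonneg := bornProb_nonneg hσ ((hE.posSemidef x).mul_mul_conjTranspose_same (f x • 1 - F))
    rw [hconj, map_add, map_sub, map_smul, smul_eq_mul] at hnonneg
    change bornProb σ (F * (f x • E x) + f x • E x * F) - bornProb σ (F * (E x * F)) ≤ _
    linarith
  have h₁ := integrable_linearMap_comp hfE L₁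
  have h₂ := hE.integrable_comp L₂
  have hmono : ∫ x, L₁ (f x • E x) - L₂ (E x) ∂μ ≤ ∫ x, f x ^ 2 * bornProb σ (E x) ∂μ :=
    integral_mono (h₁.sub h₂) hf2 hpos
  rw [integral_sub h₁ h₂, hL₁, hL₂] at hmono
  linarith

/-- The choice `f = p / r` turns `p² / r` into `2 f p - f² r`, to which the Kadison–Schwarz
inequality applies. -/
theorem exists_integral_sq_div_le (hE : IsPOVMDensity μ E) {ρ τ : Matrix n n ℂ}
    (hρ : ρ.PosSemidef) (hτ : τ.PosSemidef) {C : ℝ} (hρτ : (C • τ - ρ).PosSemidef) :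
    ∃ F : Matrix n n ℂ, F.IsHermitian ∧
      ∫ x, bornProb ρ (E x) ^ 2 / bornProb τ (E x) ∂μ ≤
        2 * bornProb ρ F - bornProb τ (F * F) := by
  let f : Ω → ℝ := fun x ↦ bornProb ρ (E x) / bornProb τ (E x)
  have hpint : Integrable (fun x ↦ bornProb ρ (E x)) μ := hE.integrable_comp (bornProb ρ)
  have hrint : Integrable (fun x ↦ bornProb τ (E x)) μ := hE.integrable_comp (bornProb τ)
  have hfm : AEStronglyMeasurable f μ :=
    hpint.aestronglyMeasurable.div₀ hrint.aestronglyMeasurable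
  have hf (x : Ω) : ‖f x‖ ≤ |C| := norm_bornProb_div_le hρ hτ hρτ (hE.posSemidef x)
  have hfE : Integrable (fun x ↦ f x • E x) μ := hE.integrable.bdd_smul _ hfm (.of_forall hf)
  have hfp : Integrable (fun x ↦ f x * bornProb ρ (E x)) μ := hpint.bdd_mul hfm (.of_forall hf)
  have hsq (x : Ω) : f x * bornProb ρ (E x) = f x ^ 2 * bornProb τ (E x) := by
    simp only [f]
    by_cases h : bornProb τ (E x) = 0
    · simp [h]
    · field_simp
  have hKS : bornProb τ ((∫ x, f x • E x ∂μ) * ∫ x, f x • E x ∂μ) ≤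
      ∫ x, f x * bornProb ρ (E x) ∂μ := by
    simp only [hsq] at hfp ⊢
    exact hE.bornProb_integral_smul_mul_self_le hτ hfE hfp
  have hρF : bornProb ρ (∫ x, f x • E x ∂μ) = ∫ x, f x * bornProb ρ (E x) ∂μ := by
    rw [← integral_linearMap_comp hfE]
    simp only [map_smul, smul_eq_mul]
  have hval : ∫ x, bornProb ρ (E x) ^ 2 / bornProb τ (E x) ∂μ =
      ∫ x, f x * bornProb ρ (E x) ∂μ := by
    congr with x
    ring
  exact ⟨∫ x, f x • E x ∂μ, hE.isHermitian_integral_smul hfE, by linarith⟩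

end IsPOVMDensity

theorem isPOVMDensity_pureState {μ : Measure Ω} {φ : Ω → n → ℂ}
    (hint : ∀ i j, Integrable (fun a ↦ φ a i * starRingEnd ℂ (φ a j)) μ)
    (hres : ∀ i j, ∫ a, φ a i * starRingEnd ℂ (φ a j) ∂μ = (1 : Matrix n n ℂ) i j) :
    IsPOVMDensity μ (fun a ↦ pureState (φ a)) := by
  have hint' : Integrable (fun a ↦ pureState (φ a)) μ := integrable_matrix_iff.2 hint
  exact ⟨fun a ↦ pureState_posSemidef _, hint',
    ext fun i j ↦ (integral_matrix_apply hint' i j).trans (hres i j)⟩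

theorem isFiniteMeasure_of_isPOVMDensity_pureState {μ : Measure Ω} {φ : Ω → n → ℂ}
    (hφ : IsPOVMDensity μ fun a ↦ pureState (φ a)) (hunit : ∀ a, star (φ a) ⬝ᵥ φ a = 1) :
    IsFiniteMeasure μ := by
  have htrace := hφ.integrable_comp (bornProb 1)
  simp only [bornProb_pureState, one_mulVec, hunit] at htrace
  exact (integrable_const_iff_isFiniteMeasure one_ne_zero).1 htrace

theorem isPOVMDensity_pureState_col [MeasurableSpace n] [DiscreteMeasurableSpace n]
    {V : Matrix n n ℂ} (hV : V ∈ unitary (Matrix n n ℂ)) :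
    IsPOVMDensity Measure.count (fun j ↦ pureState (V.col j)) :=
  ⟨fun _ ↦ pureState_posSemidef _, .of_finite, (integral_count _).trans (sum_pureState_col hV)⟩

end POVM

section Spectral

variable {n : Type*} [Fintype n]

/-- The transition probability `|⟨vⱼ, uᵢ⟩|²` between the columns of `U` and those of `V`, at
`z = (i, j)`. -/
noncomputable def overlap (U V : Matrix n n ℂ) (z : n × n) : ℝ := ‖(Vᴴ * U) z.2 z.1‖ ^ 2

theorem overlap_nonneg (U V : Matrix n n ℂ) (z : n × n) : 0 ≤ overlap U V z := sq_nonneg _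

theorem re_conjTranspose_mul_self_apply (M : Matrix n n ℂ) (i : n) :
    ((Mᴴ * M) i i).re = ∑ j, ‖M j i‖ ^ 2 := by
  simp only [mul_apply, conjTranspose_apply, Complex.star_def, Complex.conj_mul', Complex.re_sum,
    ← Complex.ofReal_pow, Complex.ofReal_re]

variable [DecidableEq n]

/-- The operator `∑ i, d i |uᵢ⟩⟨uᵢ|`, where the `uᵢ` are the columns of `U`. -/
def spectralMatrix (U : Matrix n n ℂ) (d : n → ℝ) : Matrix n n ℂ :=
  U * diagonal (fun i ↦ (d i : ℂ)) * Uᴴ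

theorem spectralMatrix_posSemidef (U : Matrix n n ℂ) {d : n → ℝ} (hd : ∀ i, 0 ≤ d i) :
    (spectralMatrix U d).PosSemidef :=
  (PosSemidef.diagonal fun i ↦ Complex.zero_le_real.2 (hd i)).mul_mul_conjTranspose_same U

theorem spectralMatrix_eigenvalues {A : Matrix n n ℂ} (hA : A.IsHermitian) :
    spectralMatrix (hA.eigenvectorUnitary : Matrix n n ℂ) hA.eigenvalues = A :=
  (hA.spectral_theorem.trans (Unitary.conjStarAlgAut_apply _ _)).symm

theorem spectralMatrix_kronecker {n₁ n₂ : Type*} [Fintype n₁] [Fintype n₂] [DecidableEq n₁]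
    [DecidableEq n₂] (A : Matrix n₁ n₁ ℂ) (B : Matrix n₂ n₂ ℂ) (α : n₁ → ℝ)
    (β : n₂ → ℝ) : spectralMatrix A α ⊗ₖ spectralMatrix B β =
      spectralMatrix (A ⊗ₖ B) fun z ↦ α z.1 * β z.2 := by
  simp only [spectralMatrix, mul_kronecker_mul, diagonal_kronecker_diagonal,
    conjTranspose_kronecker, Complex.ofReal_mul]

theorem bornProb_spectralMatrix (U : Matrix n n ℂ) (d : n → ℝ) (M : Matrix n n ℂ) :
    bornProb (spectralMatrix U d) M = ∑ i, d i * ((Uᴴ * M * U) i i).re := by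
  rw [bornProb_apply, spectralMatrix, mul_assoc, trace_mul_comm, ← mul_assoc, trace_mul_comm,
    trace, Complex.re_sum]
  simp only [diag_apply, diagonal_mul, Complex.re_ofReal_mul]

theorem sum_overlap_right {U V : Matrix n n ℂ} (hU : U ∈ unitary (Matrix n n ℂ))
    (hV : V ∈ unitary (Matrix n n ℂ)) (i : n) : ∑ j, overlap U V (i, j) = 1 := by
  have hunit := mul_mem (Unitary.star_mem hV) hU
  simp only [overlap, ← star_eq_conjTranspose]
  rw [← re_conjTranspose_mul_self_apply, ← star_eq_conjTranspose, (Unitary.mem_iff.1 hunit).1,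
    one_apply_eq, Complex.one_re]

theorem bornProb_spectralMatrix_col (U V : Matrix n n ℂ) (d : n → ℝ) (j : n) :
    bornProb (spectralMatrix U d) (pureState (V.col j)) = ∑ i, d i * overlap U V (i, j) := by
  rw [bornProb_spectralMatrix]
  refine Finset.sum_congr rfl fun i _ ↦ congrArg (d i * ·) ?_
  have hrank : (Uᴴ * pureState (V.col j) * U) i i = (Vᴴ * U) j i * star ((Vᴴ * U) j i) := by
    rw [← conjTranspose_apply (Vᴴ * U), conjTranspose_mul, conjTranspose_conjTranspose, pureState,
      mul_vecMulVec, vecMulVec_mul, vecMulVec_apply, mul_comm]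
    rfl
  rw [hrank, Complex.star_def, Complex.mul_conj', ← Complex.ofReal_pow, Complex.ofReal_re, overlap]

theorem bornProb_spectralMatrix_col_self {V : Matrix n n ℂ} (hV : V ∈ unitary (Matrix n n ℂ))
    (d : n → ℝ) (j : n) : bornProb (spectralMatrix V d) (pureState (V.col j)) = d j := by
  simp only [bornProb_spectralMatrix_col, overlap, ← star_eq_conjTranspose,
    (Unitary.mem_iff.1 hV).1]
  rw [Finset.sum_eq_single j] <;> simp +contextual [one_apply, eq_comm]

theorem bornProb_eigenvectorUnitary_col {A : Matrix n n ℂ} (hA : A.IsHermitian) (j : n) :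
    bornProb A (pureState ((hA.eigenvectorUnitary : Matrix n n ℂ).col j)) = hA.eigenvalues j := by
  have hcol := bornProb_spectralMatrix_col_self hA.eigenvectorUnitary.2 hA.eigenvalues j
  rwa [spectralMatrix_eigenvalues] at hcol

theorem two_mul_re_sub_le {l r : ℝ} (hl : 0 ≤ l) (hr : 0 ≤ r) (hlr : r = 0 → l = 0) (w g : ℂ) :
    2 * (l * (star w * g).re) - r * ‖g‖ ^ 2 ≤ (l * ‖w‖ ^ 2) ^ 2 / (r * ‖w‖ ^ 2) := by
  have hre : (star w * g).re ≤ ‖w‖ * ‖g‖ := by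
    simpa only [norm_mul, norm_star] using Complex.re_le_norm (star w * g)
  have hmul := mul_le_mul_of_nonneg_left hre hl
  rcases hr.eq_or_lt with rfl | hr
  · simp [hlr rfl]
  have hsq : (l * ‖w‖ ^ 2) ^ 2 / (r * ‖w‖ ^ 2) - 2 * (l * (‖w‖ * ‖g‖)) + r * ‖g‖ ^ 2 =
      (l * ‖w‖ - r * ‖g‖) ^ 2 / r := by
    rcases eq_or_ne ‖w‖ 0 with hw | _
    · rw [hw]
      field_simp
      ring
    · field_simp
      ring
  have hnonneg : 0 ≤ (l * ‖w‖ - r * ‖g‖) ^ 2 / r := by positivity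
  linarith

/-- In the eigenbases of the two states the left-hand side is a sum of terms
`2 l Re (w̄ g) - (s + t l) |g|²`; complete the square in each. -/
theorem two_mul_bornProb_sub_le {U V F : Matrix n n ℂ} (hU : U ∈ unitary (Matrix n n ℂ))
    (hV : V ∈ unitary (Matrix n n ℂ)) (hF : F.IsHermitian) {l s : n → ℝ} (hl : ∀ i, 0 ≤ l i)
    (hs : ∀ j, 0 ≤ s j) {t : ℝ} (ht : 0 < t) :
    2 * bornProb (spectralMatrix U l) F -
        bornProb (spectralMatrix V s + t • spectralMatrix U l) (F * F) ≤
      ∑ i, ∑ j, (l i * overlap U V (i, j)) ^ 2 /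
        (s j * overlap U V (i, j) + t * (l i * overlap U V (i, j))) := by
  have hUU : U * Uᴴ = 1 := (Unitary.mem_iff.1 hU).2
  have hVV : V * Vᴴ = 1 := (Unitary.mem_iff.1 hV).2
  set W := Vᴴ * U with hW
  set G := Vᴴ * F * U with hG
  have hWG : Uᴴ * F * U = Wᴴ * G := by
    simp only [hW, hG, conjTranspose_mul, conjTranspose_conjTranspose, mul_assoc]
    rw [← mul_assoc V, hVV, one_mul]
  have hGG : Uᴴ * (F * F) * U = Gᴴ * G := by
    simp only [hG, conjTranspose_mul, conjTranspose_conjTranspose, hF.eq, mul_assoc]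
    rw [← mul_assoc V, hVV, one_mul]
  have hGG' : Vᴴ * (F * F) * V = Gᴴᴴ * Gᴴ := by
    simp only [hG, conjTranspose_mul, conjTranspose_conjTranspose, hF.eq, mul_assoc]
    rw [← mul_assoc U, hUU, one_mul]
  have hρF : bornProb (spectralMatrix U l) F = ∑ i, ∑ j, l i * (star (W j i) * G j i).re := by
    rw [bornProb_spectralMatrix, hWG]
    simp only [mul_apply, conjTranspose_apply, Complex.re_sum, Finset.mul_sum]
  have hρFF : bornProb (spectralMatrix U l) (F * F) = ∑ i, ∑ j, l i * ‖G j i‖ ^ 2 := by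
    simp only [bornProb_spectralMatrix, hGG, re_conjTranspose_mul_self_apply, Finset.mul_sum]
  have hσFF : bornProb (spectralMatrix V s) (F * F) = ∑ i, ∑ j, s j * ‖G j i‖ ^ 2 := by
    rw [bornProb_spectralMatrix, hGG', Finset.sum_comm]
    simp only [re_conjTranspose_mul_self_apply, conjTranspose_apply, norm_star, Finset.mul_sum]
  rw [bornProb_comm (_ + _), map_add, map_smul, bornProb_comm _ (spectralMatrix V s),
    bornProb_comm _ (spectralMatrix U l), hρF, hρFF, hσFF, smul_eq_mul]
  simp only [Finset.mul_sum, ← Finset.sum_add_distrib, ← Finset.sum_sub_distrib]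
  refine Finset.sum_le_sum fun i _ ↦ Finset.sum_le_sum fun j _ ↦ ?_
  have hsq := two_mul_re_sub_le (hl i) (add_nonneg (hs j) (mul_nonneg ht.le (hl i)))
    (fun h ↦ by nlinarith [hs j, hl i, mul_nonneg ht.le (hl i)]) (W j i) (G j i)
  simpa only [overlap, add_mul, mul_assoc] using hsq

end Spectral

section Monotonicity

variable {Ω n : Type*} [MeasurableSpace Ω] {μ : Measure Ω} [Fintype n] [DecidableEq n]
  {U V : Matrix n n ℂ} {l s : n → ℝ} {E : Ω → Matrix n n ℂ}

theorem IsPOVMDensity.integral_sq_div_le (hE : IsPOVMDensity μ E)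
    (hU : U ∈ unitary (Matrix n n ℂ)) (hV : V ∈ unitary (Matrix n n ℂ)) (hl : ∀ i, 0 ≤ l i)
    (hs : ∀ j, 0 ≤ s j) {t : ℝ} (ht : 0 < t) :
    ∫ x, bornProb (spectralMatrix U l) (E x) ^ 2 / (bornProb (spectralMatrix V s) (E x) +
        t * bornProb (spectralMatrix U l) (E x)) ∂μ ≤
      ∑ z : n × n, (l z.1 * overlap U V z) ^ 2 /
        (s z.2 * overlap U V z + t * (l z.1 * overlap U V z)) := by
  have hρ := spectralMatrix_posSemidef U hl
  have hσ := spectralMatrix_posSemidef V hs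
  set ρ := spectralMatrix U l
  set σ := spectralMatrix V s
  have hdom : (t⁻¹ • (σ + t • ρ) - ρ).PosSemidef := by
    rw [smul_add, inv_smul_smul₀ ht.ne', add_sub_cancel_right]
    exact hσ.smul (inv_nonneg.2 ht.le)
  obtain ⟨F, hF, hle⟩ := hE.exists_integral_sq_div_le hρ (hσ.add (hρ.smul ht.le)) hdom
  have hadd (x : Ω) :
      bornProb (σ + t • ρ) (E x) = bornProb σ (E x) + t * bornProb ρ (E x) := by
    rw [bornProb_comm, map_add, map_smul, bornProb_comm _ σ, bornProb_comm _ ρ, smul_eq_mul]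
  simp only [hadd] at hle
  rw [Fintype.sum_prod_type]
  exact hle.trans (two_mul_bornProb_sub_le hU hV hF hl hs ht)

theorem bornProb_spectralMatrix_one (hU : U ∈ unitary (Matrix n n ℂ)) (d : n → ℝ) :
    bornProb (spectralMatrix U d) 1 = ∑ i, d i := by
  simp only [bornProb_spectralMatrix, mul_one, ← star_eq_conjTranspose, (Unitary.mem_iff.1 hU).1,
    one_apply_eq, Complex.one_re]

theorem mul_overlap_eq_zero (hl : ∀ i, 0 ≤ l i) {j : n}
    (hj : bornProb (spectralMatrix U l) (pureState (V.col j)) = 0) (i : n) :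
    l i * overlap U V (i, j) = 0 := by
  rw [bornProb_spectralMatrix_col, Finset.sum_eq_zero_iff_of_nonneg fun i _ ↦
    mul_nonneg (hl i) (overlap_nonneg U V _)] at hj
  exact hj i (Finset.mem_univ i)

theorem sum_mul_log_div_overlap (hU : U ∈ unitary (Matrix n n ℂ))
    (hV : V ∈ unitary (Matrix n n ℂ)) (hac : ∀ z : n × n, s z.2 = 0 → l z.1 * overlap U V z = 0) :
    ∑ z, l z.1 * overlap U V z * log (l z.1 * overlap U V z / (s z.2 * overlap U V z)) =
      ∑ i, l i * log (l i) -
        ∑ j, bornProb (spectralMatrix U l) (pureState (V.col j)) * log (s j) := by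
  have hterm (z : n × n) :
      l z.1 * overlap U V z * log (l z.1 * overlap U V z / (s z.2 * overlap U V z)) =
        l z.1 * log (l z.1) * overlap U V z - l z.1 * overlap U V z * log (s z.2) := by
    by_cases hz : l z.1 * overlap U V z = 0
    · rw [mul_right_comm (l z.1) (log (l z.1)), hz]
      simp only [zero_mul, sub_zero]
    · have hs : s z.2 ≠ 0 := fun h ↦ hz (hac z h)
      rw [mul_div_mul_right _ _ (right_ne_zero_of_mul hz), log_div (left_ne_zero_of_mul hz) hs]
      ring
  simp only [hterm, Finset.sum_sub_distrib]
  congr 1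
  · simp only [Fintype.sum_prod_type, ← Finset.mul_sum, sum_overlap_right hU hV, mul_one]
  · simp only [Fintype.sum_prod_type_right, bornProb_spectralMatrix_col, Finset.sum_mul]

theorem sum_mul_log_eigenvalues {A : Matrix n n ℂ} (hA : A.IsHermitian) :
    ∑ i, hA.eigenvalues i * log (hA.eigenvalues i) = -entropy A := by
  simp only [entropy, dif_pos hA, negMulLog, neg_mul, Finset.sum_neg_distrib, neg_neg]

/-- Monotonicity of relative entropy under measurements. The right-hand side is
`Tr ρ (log ρ - log σ)`, which is also the relative entropy of the two Nussbaum–Szkoła distributions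
`l i |⟨vⱼ, uᵢ⟩|²` and `s j |⟨vⱼ, uᵢ⟩|²`. -/
theorem IsPOVMDensity.relEntropy_bornProb_le [SFinite μ] (hE : IsPOVMDensity μ E)
    {ρ : Matrix n n ℂ} (hρ : ρ.PosSemidef) (hV : V ∈ unitary (Matrix n n ℂ)) (hs : ∀ j, 0 ≤ s j)
    (hac : ∀ j, s j = 0 → bornProb ρ (pureState (V.col j)) = 0)
    (hfin : FiniteRelEntropy μ (fun x ↦ bornProb ρ (E x))
      (fun x ↦ bornProb (spectralMatrix V s) (E x))) :
    relEntropy μ (fun x ↦ bornProb ρ (E x)) (fun x ↦ bornProb (spectralMatrix V s) (E x)) ≤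
      -entropy ρ - ∑ j, bornProb ρ (pureState (V.col j)) * log (s j) := by
  rw [← sum_mul_log_eigenvalues hρ.isHermitian]
  have hl := hρ.eigenvalues_nonneg
  have hU : (hρ.isHermitian.eigenvectorUnitary : Matrix n n ℂ) ∈ unitary (Matrix n n ℂ) :=
    hρ.isHermitian.eigenvectorUnitary.2
  have hspec := spectralMatrix_eigenvalues hρ.isHermitian
  generalize hρ.isHermitian.eigenvalues = l,
    (hρ.isHermitian.eigenvectorUnitary : Matrix n n ℂ) = U at hl hU hspec ⊢
  subst hspec
  have hac' (z : n × n) (hz : s z.2 = 0) : l z.1 * overlap U V z = 0 :=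
    mul_overlap_eq_zero hl (hac z.2 hz) z.1
  let _ : MeasurableSpace n := ⊤
  have _ : DiscreteMeasurableSpace n := ⟨fun _ ↦ trivial⟩
  have hNS : FiniteRelEntropy Measure.count (fun z ↦ l z.1 * overlap U V z)
      (fun z ↦ s z.2 * overlap U V z) := by
    refine .of_finite (fun z ↦ mul_nonneg (hl _) (overlap_nonneg U V z))
      (fun z ↦ mul_nonneg (hs _) (overlap_nonneg U V z)) fun z hz ↦ ?_
    rcases mul_eq_zero.1 hz with hz | hz
    · exact hac' z hz
    · rw [hz, mul_zero]
  rw [← sum_mul_log_div_overlap hU hV hac', ← integral_count]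
  refine relEntropy_le_of_integral_sq_div_le hfin hNS ?_ fun t ht ↦ ?_
  · rw [hE.integral_comp, bornProb_spectralMatrix_one hU, integral_count, Fintype.sum_prod_type]
    simp only [← Finset.mul_sum, sum_overlap_right hU hV, mul_one]
  · rw [integral_count]
    exact hE.integral_sq_div_le hU hV hl hs ht

end Monotonicity

section MutualInformation

theorem integrable_negMulLog_comp {Ω : Type*} [MeasurableSpace Ω] {μ : Measure Ω}
    [IsFiniteMeasure μ] {f : Ω → ℝ} {C : ℝ} (hf : AEStronglyMeasurable f μ) (hf0 : ∀ x, 0 ≤ f x)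
    (hfC : ∀ x, f x ≤ C) : Integrable (fun x ↦ negMulLog (f x)) μ := by
  obtain ⟨B, hB⟩ := isCompact_Icc.exists_bound_of_continuousOn
    (continuous_negMulLog.continuousOn (s := Icc 0 C))
  exact .of_bound (continuous_negMulLog.comp_aestronglyMeasurable hf) B
    (.of_forall fun x ↦ hB _ ⟨hf0 x, hfC x⟩)

theorem integral_count_prod_count {X Y : Type*} [Fintype X] [Fintype Y] [MeasurableSpace X]
    [DiscreteMeasurableSpace X] [MeasurableSpace Y] [DiscreteMeasurableSpace Y] (f : X × Y → ℝ) :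
    ∫ z, f z ∂(Measure.count.prod Measure.count) = ∑ z, f z := by
  rw [integral_prod _ .of_finite, Fintype.sum_prod_type]
  simp only [integral_count]

variable {n n₁ n₂ Ω₁ Ω₂ : Type*} [Fintype n] [Fintype n₁] [Fintype n₂] [DecidableEq n]
  [DecidableEq n₁] [DecidableEq n₂] [MeasurableSpace Ω₁] [MeasurableSpace Ω₂]

theorem isCoupling_bornProb {μ : Measure Ω₁} {ν : Measure Ω₂} [IsFiniteMeasure μ]
    [IsFiniteMeasure ν] {E : Ω₁ → Matrix n₁ n₁ ℂ} {F : Ω₂ → Matrix n₂ n₂ ℂ}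
    (hE : IsPOVMDensity μ E) (hF : IsPOVMDensity ν F) (hE1 : ∀ a, (1 - E a).PosSemidef)
    (hF1 : ∀ b, (1 - F b).PosSemidef) {ρ : Matrix (n₁ × n₂) (n₁ × n₂) ℂ} (hρ : ρ.PosSemidef) :
    IsCoupling μ ν (fun z ↦ bornProb ρ (E z.1 ⊗ₖ F z.2)) (fun a ↦ bornProb (ptraceSnd ρ) (E a))
      (fun b ↦ bornProb (ptraceFst ρ) (F b)) := by
  have hEF := hE.kronecker hF
  have hnonneg (z : Ω₁ × Ω₂) : 0 ≤ bornProb ρ (E z.1 ⊗ₖ F z.2) :=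
    bornProb_nonneg hρ (hEF.posSemidef z)
  have hle_fst (z : Ω₁ × Ω₂) : bornProb ρ (E z.1 ⊗ₖ F z.2) ≤ bornProb (ptraceSnd ρ) (E z.1) :=
    bornProb_kronecker_le_fst hρ (hE.posSemidef _) (hF1 _)
  have hle_snd (z : Ω₁ × Ω₂) : bornProb ρ (E z.1 ⊗ₖ F z.2) ≤ bornProb (ptraceFst ρ) (F z.2) :=
    bornProb_kronecker_le_snd hρ (hE1 _) (hF.posSemidef _)
  have hfst := hE.integrable_comp (bornProb (ptraceSnd ρ))
  have hsnd := hF.integrable_comp (bornProb (ptraceFst ρ))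
  have hle_one_fst (a : Ω₁) : bornProb (ptraceSnd ρ) (E a) ≤ bornProb (ptraceSnd ρ) 1 :=
    bornProb_mono (ptraceSnd_posSemidef hρ) (hE1 a)
  have hle_one_snd (b : Ω₂) : bornProb (ptraceFst ρ) (F b) ≤ bornProb (ptraceFst ρ) 1 :=
    bornProb_mono (ptraceFst_posSemidef hρ) (hF1 b)
  refine ⟨hnonneg, hle_fst, hle_snd, hEF.integrable_comp (bornProb ρ), hfst.aemeasurable,
    hsnd.aemeasurable, fun a ↦ ?_, fun b ↦ ?_, ?_, ?_, ?_⟩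
  · rw [← bornProb_kronecker_one]
    exact hF.integral_comp (bornProb ρ ∘ₗ kroneckerBilinear (R := ℝ) (E a))
  · rw [← bornProb_one_kronecker]
    exact hE.integral_comp (bornProb ρ ∘ₗ (kroneckerBilinear (R := ℝ)).flip (F b))
  · exact integrable_negMulLog_comp (hEF.integrable_comp (bornProb ρ)).aestronglyMeasurable hnonneg
      fun z ↦ (hle_fst z).trans (hle_one_fst z.1)
  · exact integrable_negMulLog_comp hfst.aestronglyMeasurable
      (fun a ↦ bornProb_nonneg (ptraceSnd_posSemidef hρ) (hE.posSemidef a)) hle_one_fst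
  · exact integrable_negMulLog_comp hsnd.aestronglyMeasurable
      (fun b ↦ bornProb_nonneg (ptraceFst_posSemidef hρ) (hF.posSemidef b)) hle_one_snd

theorem isCoupling_eigenvalues [MeasurableSpace n₁] [DiscreteMeasurableSpace n₁]
    [MeasurableSpace n₂] [DiscreteMeasurableSpace n₂] {ρ : Matrix (n₁ × n₂) (n₁ × n₂) ℂ}
    (hρ : ρ.PosSemidef) (h₁ : (ptraceSnd ρ).IsHermitian) (h₂ : (ptraceFst ρ).IsHermitian) :
    IsCoupling Measure.count Measure.count
      (fun z ↦ bornProb ρ (pureState (((h₁.eigenvectorUnitary : Matrix n₁ n₁ ℂ) ⊗ₖ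
        (h₂.eigenvectorUnitary : Matrix n₂ n₂ ℂ)).col z))) h₁.eigenvalues h₂.eigenvalues := by
  have hA := h₁.eigenvectorUnitary.2
  have hB := h₂.eigenvectorUnitary.2
  have hcoupling := isCoupling_bornProb (isPOVMDensity_pureState_col hA)
    (isPOVMDensity_pureState_col hB)
    (fun i ↦ one_sub_pureState_posSemidef (star_col_dotProduct_col hA i))
    (fun j ↦ one_sub_pureState_posSemidef (star_col_dotProduct_col hB j)) hρ
  simpa only [bornProb_eigenvectorUnitary_col, ← pureState_col_kronecker] using hcoupling

theorem integral_negMulLog_eigenvalues [MeasurableSpace n] [DiscreteMeasurableSpace n]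
    {A : Matrix n n ℂ} (hA : A.IsHermitian) :
    ∫ i, negMulLog (hA.eigenvalues i) ∂Measure.count = entropy A := by
  rw [integral_count, entropy, dif_pos hA]

theorem relEntropy_bornProb_kronecker_le {μ : Measure Ω₁} {ν : Measure Ω₂} [SFinite μ] [SFinite ν]
    {E : Ω₁ → Matrix n₁ n₁ ℂ} {F : Ω₂ → Matrix n₂ n₂ ℂ} (hE : IsPOVMDensity μ E)
    (hF : IsPOVMDensity ν F) {ρ : Matrix (n₁ × n₂) (n₁ × n₂) ℂ} (hρ : ρ.PosSemidef)
    (hfin : FiniteRelEntropy (μ.prod ν) (fun z ↦ bornProb ρ (E z.1 ⊗ₖ F z.2))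
      (fun z ↦ bornProb (ptraceSnd ρ) (E z.1) * bornProb (ptraceFst ρ) (F z.2))) :
    relEntropy (μ.prod ν) (fun z ↦ bornProb ρ (E z.1 ⊗ₖ F z.2))
        (fun z ↦ bornProb (ptraceSnd ρ) (E z.1) * bornProb (ptraceFst ρ) (F z.2)) ≤
      entropy (ptraceSnd ρ) + entropy (ptraceFst ρ) - entropy ρ := by
  let _ : MeasurableSpace n₁ := ⊤
  let _ : MeasurableSpace n₂ := ⊤
  have _ : DiscreteMeasurableSpace n₁ := ⟨fun _ ↦ trivial⟩
  have _ : DiscreteMeasurableSpace n₂ := ⟨fun _ ↦ trivial⟩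
  have h₁ := (ptraceSnd_posSemidef hρ).isHermitian
  have h₂ := (ptraceFst_posSemidef hρ).isHermitian
  have hcoupling := isCoupling_eigenvalues hρ h₁ h₂
  have hprod : ptraceSnd ρ ⊗ₖ ptraceFst ρ = spectralMatrix (h₁.eigenvectorUnitary ⊗ₖ
      h₂.eigenvectorUnitary) fun z ↦ h₁.eigenvalues z.1 * h₂.eigenvalues z.2 := by
    rw [← spectralMatrix_kronecker, spectralMatrix_eigenvalues, spectralMatrix_eigenvalues]
  have hborn (z : Ω₁ × Ω₂) : bornProb (ptraceSnd ρ) (E z.1) * bornProb (ptraceFst ρ) (F z.2) =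
      bornProb (spectralMatrix (h₁.eigenvectorUnitary ⊗ₖ h₂.eigenvectorUnitary)
        fun z ↦ h₁.eigenvalues z.1 * h₂.eigenvalues z.2) (E z.1 ⊗ₖ F z.2) := by
    rw [← hprod, bornProb_kronecker h₁ (hE.posSemidef _).isHermitian h₂
      (hF.posSemidef _).isHermitian]
  simp only [hborn] at hfin ⊢
  refine ((hE.kronecker hF).relEntropy_bornProb_le hρ
    (kronecker_mem_unitary h₁.eigenvectorUnitary.2 h₂.eigenvectorUnitary.2)
    (fun z ↦ mul_nonneg (hcoupling.fst_nonneg _) (hcoupling.snd_nonneg _))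
    hcoupling.eq_zero_of_mul_eq_zero hfin).trans_eq ?_
  rw [← integral_count_prod_count, hcoupling.integral_mul_log_mul, integral_negMulLog_eigenvalues,
    integral_negMulLog_eigenvalues]
  ring

theorem wehrl_mutual_info_le_quantum_mutual_info_general {μ : Measure Ω₁} {ν : Measure Ω₂}
    [IsFiniteMeasure μ] [IsFiniteMeasure ν] {E : Ω₁ → Matrix n₁ n₁ ℂ} {F : Ω₂ → Matrix n₂ n₂ ℂ}
    (hE : IsPOVMDensity μ E) (hF : IsPOVMDensity ν F) (hE1 : ∀ a, (1 - E a).PosSemidef)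
    (hF1 : ∀ b, (1 - F b).PosSemidef) {ρ : Matrix (n₁ × n₂) (n₁ × n₂) ℂ} (hρ : ρ.PosSemidef) :
    ∫ a, negMulLog (bornProb (ptraceSnd ρ) (E a)) ∂μ +
        ∫ b, negMulLog (bornProb (ptraceFst ρ) (F b)) ∂ν -
        ∫ a, ∫ b, negMulLog (bornProb ρ (E a ⊗ₖ F b)) ∂ν ∂μ ≤
      entropy (ptraceSnd ρ) + entropy (ptraceFst ρ) - entropy ρ := by
  have hcoupling := isCoupling_bornProb hE hF hE1 hF1 hρ
  rw [integral_integral hcoupling.integrable_negMulLog, ← hcoupling.relEntropy_eq]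
  exact relEntropy_bornProb_kronecker_le hE hF hρ hcoupling.finiteRelEntropy

end MutualInformation

/-- **Quantum mutual information bounds Wehrl mutual information**:
`S^W[ρ₁] + S^W[ρ₂] − S^W[ρ₁₂] ≤ S[ρ₁] + S[ρ₂] − S[ρ₁₂]`. -/
theorem wehrl_mutual_info_le_quantum_mutual_info
    {n₁ n₂ : Type*} [Fintype n₁] [Fintype n₂]
    [DecidableEq n₁] [DecidableEq n₂]
    {Ω₁ Ω₂ : Type*} [MeasurableSpace Ω₁] [MeasurableSpace Ω₂]
    (μ : Measure Ω₁) (ν : Measure Ω₂)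
    (φ : Ω₁ → n₁ → ℂ) (θ : Ω₂ → n₂ → ℂ)
    (hφm : ∀ i, Measurable fun a => φ a i)
    (hθm : ∀ i, Measurable fun b => θ b i)
    (hφu : ∀ a, star (φ a) ⬝ᵥ φ a = 1)
    (hθu : ∀ b, star (θ b) ⬝ᵥ θ b = 1)
    (hφint : ∀ i j, Integrable (fun a => φ a i * (starRingEnd ℂ) (φ a j)) μ)
    (hθint : ∀ i j, Integrable (fun b => θ b i * (starRingEnd ℂ) (θ b j)) ν)
    (hφres : ∀ i j, (∫ a, φ a i * (starRingEnd ℂ) (φ a j) ∂μ) =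
      (1 : Matrix n₁ n₁ ℂ) i j)
    (hθres : ∀ i j, (∫ b, θ b i * (starRingEnd ℂ) (θ b j) ∂ν) =
      (1 : Matrix n₂ n₂ ℂ) i j)
    (ρ : Matrix (n₁ × n₂) (n₁ × n₂) ℂ)
    (hρ : ρ.PosSemidef) (hρtr : ρ.trace = 1) :
    wehrlEntropy μ φ (ptraceSnd ρ) + wehrlEntropy ν θ (ptraceFst ρ)
      - (∫ a, ∫ b, Real.negMulLog
          ((star (fun p : n₁ × n₂ => φ a p.1 * θ b p.2) ⬝ᵥ
            ρ *ᵥ (fun p : n₁ × n₂ => φ a p.1 * θ b p.2)).re) ∂ν ∂μ)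
    ≤ entropy (ptraceSnd ρ) + entropy (ptraceFst ρ) - entropy ρ := by
  have hE := isPOVMDensity_pureState hφint hφres
  have hF := isPOVMDensity_pureState hθint hθres
  have := isFiniteMeasure_of_isPOVMDensity_pureState hE hφu
  have := isFiniteMeasure_of_isPOVMDensity_pureState hF hθu
  simpa only [wehrlEntropy, pureState_kronecker, bornProb_pureState] using
    wehrl_mutual_info_le_quantum_mutual_info_general hE hF
      (fun a ↦ one_sub_pureState_posSemidef (hφu a))
      (fun b ↦ one_sub_pureState_posSemidef (hθu b)) hρ
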